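/- Brunn–Minkowski in boxes: let P = ∏_{i=1}^d [0, n_i] ∩ ℤ^d with each n_i ≥ n, and let Y ⊆ P and Z be nonempty finite subsets of ℤ^d. Then |Y+Z|^{1/d} ≥ (max(|Y| − d·n^{−1}·|P|, 0))^{1/d} + |Z|^{1/d}. -/

import Mathlib

open Pointwise

/-- Slice of a finite set at first coordinate `i`. -/
def bmSlice {m : ℕ} (A : Finset (Fin (m+1) → ℤ)) (i : ℤ) : Finset (Fin m → ℤ) :=
  (A.filter (fun y => y 0 = i)).image Fin.tail

lemma mem_bmSlice {m : ℕ} (A : Finset (Fin (m+1) → ℤ)) (i : ℤ) (w : Fin m → ℤ) :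
    w ∈ bmSlice A i ↔ (Fin.cons i w : Fin (m+1) → ℤ) ∈ A := by
  unfold bmSlice
  simp only [Finset.mem_image, Finset.mem_filter]
  constructor
  · rintro ⟨y, ⟨hy, rfl⟩, rfl⟩
    rwa [Fin.cons_self_tail]
  · intro h
    exact ⟨_, ⟨h, by simp⟩, by simp⟩

lemma card_bmSlice {m : ℕ} (A : Finset (Fin (m+1) → ℤ)) (i : ℤ) :
    (bmSlice A i).card = (A.filter (fun y => y 0 = i)).card := by
  unfold bmSlice
  apply Finset.card_image_of_injOn
  intro x hx y hy h
  simp only [Finset.coe_filter, Set.mem_ofPred_eq] at hx hy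
  rw [← Fin.cons_self_tail x, ← Fin.cons_self_tail y, hx.2, hy.2]
  exact congrArg _ h

lemma sum_bmSlice {m : ℕ} (A : Finset (Fin (m+1) → ℤ)) (I : Finset ℤ)
    (h : ∀ y ∈ A, y 0 ∈ I) : (A.card : ℝ) = ∑ i ∈ I, ((bmSlice A i).card : ℝ) := by
  rw [Finset.card_eq_sum_card_fiberwise (f := fun y => y 0) (t := I) (fun y hy => h y hy)]
  push_cast
  exact Finset.sum_congr rfl fun i _ => by rw [card_bmSlice]

lemma bmSlice_add {m : ℕ} (A B : Finset (Fin (m+1) → ℤ)) (i j : ℤ) :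
    bmSlice A i + bmSlice B j ⊆ bmSlice (A + B) (i + j) := by
  intro w hw
  obtain ⟨u, hu, v, hv, rfl⟩ := Finset.mem_add.1 hw
  rw [mem_bmSlice] at *
  refine Finset.mem_add.2 ⟨_, hu, _, hv, ?_⟩
  ext k
  refine Fin.cases ?_ (fun k => ?_) k <;> simp

lemma bm_layer (S : Finset ℤ) (x : ℤ → ℝ) (hx : ∀ i ∈ S, 0 ≤ x i) :
    MeasureTheory.IntegrableOn
      (fun t : ℝ => ((S.filter (fun i => t ≤ x i)).card : ℝ)) (Set.Ioc 0 1) ∧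
    ∫ t in Set.Ioc (0:ℝ) 1, ((S.filter (fun i => t ≤ x i)).card : ℝ) = ∑ i ∈ S, min (x i) 1 := by
  have e : (fun t : ℝ => ((S.filter (fun i => t ≤ x i)).card : ℝ)) =
      fun t => ∑ i ∈ S, (Set.Iic (x i)).indicator (fun _ => (1:ℝ)) t := by
    ext t
    rw [Finset.card_filter]
    push_cast
    exact Finset.sum_congr rfl fun i _ => by simp [Set.indicator_apply]
  have hi : ∀ i ∈ S, MeasureTheory.Integrable
      (fun t => (Set.Iic (x i)).indicator (fun _ => (1:ℝ)) t)
      (MeasureTheory.volume.restrict (Set.Ioc (0:ℝ) 1)) := fun i _ =>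
    (MeasureTheory.integrable_const (1:ℝ)).indicator measurableSet_Iic
  rw [e]
  refine ⟨MeasureTheory.integrable_finsetSum _ hi, ?_⟩
  rw [MeasureTheory.integral_finsetSum _ hi]
  refine Finset.sum_congr rfl fun i his => ?_
  rw [MeasureTheory.integral_indicator measurableSet_Iic,
    MeasureTheory.Measure.restrict_restrict measurableSet_Iic]
  have : Set.Iic (x i) ∩ Set.Ioc 0 1 = Set.Ioc 0 (min (x i) 1) := by
    ext t; simp; tauto
  rw [this]
  have := hx i his
  simp [this]

lemma bm_layer_le (S I J : Finset ℤ) (h f g : ℤ → ℝ) (hh : ∀ i ∈ S, 0 ≤ h i)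
    (hf : ∀ i ∈ I, 0 ≤ f i ∧ f i ≤ 1) (hg : ∀ i ∈ J, 0 ≤ g i ∧ g i ≤ 1)
    (hf1 : ∃ i ∈ I, f i = 1) (hg1 : ∃ i ∈ J, g i = 1)
    (H : ∀ t : ℝ, 0 < t → t ≤ 1 → ∀ i ∈ I, ∀ j ∈ J, t ≤ f i → t ≤ g j →
      i + j ∈ S ∧ t ≤ h (i + j)) :
    ∑ i ∈ I, f i + ∑ j ∈ J, g j ≤ ∑ k ∈ S, h k + 1 := by
  obtain ⟨fi, ff⟩ := bm_layer I f fun i hi => (hf i hi).1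
  obtain ⟨gi, gg⟩ := bm_layer J g fun i hi => (hg i hi).1
  obtain ⟨hi, h2⟩ := bm_layer S h hh
  have e1 : ∑ i ∈ I, f i = ∑ i ∈ I, min (f i) 1 :=
    Finset.sum_congr rfl fun i hi => (min_eq_left (hf i hi).2).symm
  have e2 : ∑ i ∈ J, g i = ∑ i ∈ J, min (g i) 1 :=
    Finset.sum_congr rfl fun i hi => (min_eq_left (hg i hi).2).symm
  have e3 : ∑ i ∈ S, min (h i) 1 ≤ ∑ i ∈ S, h i := Finset.sum_le_sum fun i _ => min_le_left _ _
  have one : ∫ t in Set.Ioc (0:ℝ) 1, (1:ℝ) = 1 := by simp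
  have key : (∫ t in Set.Ioc (0:ℝ) 1, (((I.filter (fun i => t ≤ f i)).card : ℝ) +
      ((J.filter (fun i => t ≤ g i)).card : ℝ))) ≤
      ∫ t in Set.Ioc (0:ℝ) 1, (((S.filter (fun i => t ≤ h i)).card : ℝ) + 1) := by
    refine MeasureTheory.setIntegral_mono_on (fi.add gi)
      (hi.add (MeasureTheory.integrable_const (1:ℝ))) measurableSet_Ioc ?_
    intro t ht
    have n1 : (I.filter (fun i => t ≤ f i)).Nonempty := by
      obtain ⟨i, hi, h1⟩ := hf1
      exact ⟨i, Finset.mem_filter.2 ⟨hi, h1 ▸ ht.2⟩⟩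
    have n2 : (J.filter (fun i => t ≤ g i)).Nonempty := by
      obtain ⟨i, hi, h1⟩ := hg1
      exact ⟨i, Finset.mem_filter.2 ⟨hi, h1 ▸ ht.2⟩⟩
    have c := cauchy_davenport_add_of_linearOrder_isCancelAdd n1 n2
    have sub : (I.filter (fun i => t ≤ f i)) + (J.filter (fun i => t ≤ g i)) ⊆
        S.filter (fun i => t ≤ h i) := by
      intro k hk
      obtain ⟨i, hi, j, hj, rfl⟩ := Finset.mem_add.1 hk
      rw [Finset.mem_filter] at *
      exact H t ht.1 ht.2 i hi.1 j hj.1 hi.2 hj.2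
    have := Finset.card_le_card sub
    have : (I.filter (fun i => t ≤ f i)).card + (J.filter (fun i => t ≤ g i)).card ≤
      (S.filter (fun i => t ≤ h i)).card + 1 := by omega
    exact_mod_cast this
  rw [MeasureTheory.integral_add fi gi,
    MeasureTheory.integral_add hi (MeasureTheory.integrable_const (1:ℝ)), one, ff, gg, h2] at key
  linarith

lemma bm_holder (m : ℕ) (a b α β : ℝ) (ha : 0 ≤ a) (hb : 0 ≤ b) (hα : 0 < α) (hβ : 0 < β) :
    (a + b) ^ (m+1) ≤ (α + β) ^ m * (a ^ (m+1) / α ^ m + b ^ (m+1) / β ^ m) := by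
  have hs : 0 < α + β := by positivity
  have hx : a / α ∈ Set.Ici (0:ℝ) := Set.mem_Ici.2 (by positivity)
  have hy : b / β ∈ Set.Ici (0:ℝ) := Set.mem_Ici.2 (by positivity)
  have w1 : 0 ≤ α / (α + β) := by positivity
  have w2 : 0 ≤ β / (α + β) := by positivity
  have w3 : α / (α + β) + β / (α + β) = 1 := by field_simp
  have := (convexOn_pow (𝕜 := ℝ) (m+1)).2 hx hy w1 w2 w3
  simp only [smul_eq_mul] at this
  have e : α / (α + β) * (a / α) + β / (α + β) * (b / β) = (a + b) / (α + β) := by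
    field_simp
  rw [e, div_pow, div_le_iff₀ (by positivity)] at this
  refine this.trans (le_of_eq ?_)
  rw [div_pow, div_pow, pow_succ α m, pow_succ β m, pow_succ (α + β) m]
  field_simp

lemma bm_root (m : ℕ) (x : ℝ) (hx : 0 < x) (h : m = 0 → x = 1) : ∃ α : ℝ, 0 < α ∧ α ^ m = x := by
  rcases Nat.eq_zero_or_pos m with rfl | hm
  · exact ⟨1, one_pos, by simp [h rfl]⟩
  · exact ⟨x ^ ((m:ℝ)⁻¹), by positivity, Real.rpow_inv_natCast_pow hx.le hm.ne'⟩

theorem bm_ind (n : ℕ) (hn : 0 < n) (d : ℕ) : ∀ (ns : Fin d → ℕ) (_ : ∀ i, n ≤ ns i)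
    (Y Z : Finset (Fin d → ℤ))
    (_ : Y ⊆ Fintype.piFinset (fun i => Finset.Icc 0 (ns i : ℤ)))
    (_ : Y.Nonempty) (_ : Z.Nonempty) (a b : ℝ) (_ : 0 ≤ a) (_ : 0 ≤ b)
    (_ : a ^ d ≤ (Y.card : ℝ) - d * (n : ℝ)⁻¹ * ∏ i, ((ns i : ℝ) + 1)) (_ : b ^ d ≤ Z.card),
    (a + b) ^ d ≤ ((Y + Z).card : ℝ) := by
  induction d with
  | zero =>
    intro ns _ Y Z _ hY hZ a b _ _ _ _
    have := (hY.add hZ).card_pos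
    simp only [pow_zero]
    exact_mod_cast this
  | succ m ih =>
    intro ns hns Y Z hYP hY hZ a b ha hb hA hB
    set p : ℝ := ∏ i : Fin m, ((ns i.succ : ℝ) + 1) with hp
    have hp0 : 0 < p := Finset.prod_pos fun i _ => by positivity
    have hn' : (0:ℝ) < n := by exact_mod_cast hn
    rw [Fin.prod_univ_succ, ← hp] at hA
    set c : ℝ := m * (n:ℝ)⁻¹ * p with hc
    have hc0 : 0 ≤ c := by positivity
    have hn0 : (n:ℝ) ≤ ns 0 := by exact_mod_cast hns 0
    have hYs : ∀ i, bmSlice Y i ⊆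
        Fintype.piFinset (fun k : Fin m => Finset.Icc 0 (ns k.succ : ℤ)) := by
      intro i w hw
      rw [mem_bmSlice] at hw
      have := hYP hw
      rw [Fintype.mem_piFinset] at this ⊢
      intro k
      simpa using this k.succ
    set I : Finset ℤ := Finset.Icc 0 (ns 0 : ℤ) with hI
    have hYI : ∀ y ∈ Y, y 0 ∈ I := fun y hy => (Fintype.mem_piFinset.1 (hYP hy)) 0
    set J : Finset ℤ := Z.image (fun z => z 0) with hJ
    have hZJ : ∀ z ∈ Z, z 0 ∈ J := fun z hz => Finset.mem_image_of_mem _ hz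
    set S : Finset ℤ := (Y + Z).image (fun z => z 0) with hS
    have hCS : ∀ z ∈ Y + Z, z 0 ∈ S := fun z hz => Finset.mem_image_of_mem _ hz
    have hIcard : (I.card : ℝ) = ns 0 + 1 := by
      rw [hI, Int.card_Icc]
      have : ((ns 0 : ℤ) + 1 - 0).toNat = ns 0 + 1 := by omega
      rw [this]; push_cast; rfl
    have sY := sum_bmSlice Y I hYI
    have sZ := sum_bmSlice Z J hZJ
    have sC := sum_bmSlice (Y + Z) S hCS
    set f : ℤ → ℝ := fun i => max (((bmSlice Y i).card : ℝ) - c) 0 with hf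
    set g : ℤ → ℝ := fun j => ((bmSlice Z j).card : ℝ) with hg
    have hIne : I.Nonempty := by
      obtain ⟨y, hy⟩ := hY; exact ⟨_, hYI y hy⟩
    have hJne : J.Nonempty := hZ.image _
    obtain ⟨i0, hi0, hmaxf⟩ := Finset.exists_max_image I f hIne
    obtain ⟨j0, hj0, hmaxg⟩ := Finset.exists_max_image J g hJne
    have hsumf : (Y.card : ℝ) - (ns 0 + 1) * c ≤ ∑ i ∈ I, f i := by
      rw [sY, ← hIcard, ← nsmul_eq_mul, ← Finset.sum_const, ← Finset.sum_sub_distrib]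
      exact Finset.sum_le_sum fun i _ => le_max_left _ _
    have hfi : ∀ i, f i ≤ p := by
      intro i
      have h1 : ((bmSlice Y i).card : ℝ) ≤ p := by
        have := Finset.card_le_card (hYs i)
        rw [Fintype.card_piFinset] at this
        have h2 : ((bmSlice Y i).card : ℝ) ≤
          ((∏ k : Fin m, (Finset.Icc 0 (ns k.succ : ℤ)).card : ℕ) : ℝ) := by exact_mod_cast this
        refine h2.trans (le_of_eq ?_)
        rw [hp]; push_cast
        refine Finset.prod_congr rfl fun k _ => ?_
        rw [Int.card_Icc]
        have : ((ns k.succ : ℤ) + 1 - 0).toNat = ns k.succ + 1 := by omega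
        rw [this]; push_cast; rfl
      exact max_le (by linarith) hp0.le
    have hexp : ((m + 1 : ℕ) : ℝ) * (n:ℝ)⁻¹ * ((ns 0 + 1) * p) =
        (ns 0 + 1) * c + (n:ℝ)⁻¹ * ((ns 0 + 1) * p) := by
      rw [hc]; push_cast; ring
    rw [hexp] at hA
    have hpl : p ≤ (n:ℝ)⁻¹ * ((ns 0 + 1) * p) := by
      rw [← mul_assoc]
      refine le_mul_of_one_le_left hp0.le ?_
      rw [inv_mul_eq_div, one_le_div hn']
      linarith
    have hA' : a ^ (m+1) ≤ ∑ i ∈ I, f i - f i0 := by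
      have := hfi i0
      linarith
    have hF : 0 < f i0 := by
      by_contra hcon
      have : ∑ i ∈ I, f i ≤ 0 := Finset.sum_nonpos fun i hi => (hmaxf i hi).trans (not_lt.1 hcon)
      have : 0 ≤ a ^ (m+1) := by positivity
      linarith
    have hG : 0 < g j0 := by
      obtain ⟨z, hz, hz0⟩ := Finset.mem_image.1 hj0
      have : (bmSlice Z j0).Nonempty := ⟨Fin.tail z, by
        rw [mem_bmSlice, ← hz0, Fin.cons_self_tail]; exact hz⟩
      have := this.card_pos
      simp only [hg]; exact_mod_cast this
    have sub1 : m = 0 → ∀ s : Finset (Fin m → ℤ), s.card ≤ 1 := by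
      rintro rfl s
      exact Finset.card_le_one.2 fun x _ y _ => Subsingleton.elim x y
    obtain ⟨α, hα, hαF⟩ := bm_root m (f i0) hF (by
      intro hm
      have h1 := sub1 hm (bmSlice Y i0)
      have hc' : c = 0 := by rw [hc, hm]; simp
      simp only [hf, hc', sub_zero] at hF ⊢
      interval_cases h : (bmSlice Y i0).card <;> simp_all)
    obtain ⟨β, hβ, hβG⟩ := bm_root m (g j0) hG (by
      intro hm
      have h1 := sub1 hm (bmSlice Z j0)
      simp only [hg] at hG ⊢
      interval_cases h : (bmSlice Z j0).card <;> simp_all)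
    set K := (α + β) ^ m with hK
    have hK0 : 0 < K := by positivity
    have main := bm_layer_le S I J (fun k => ((bmSlice (Y+Z) k).card : ℝ) / K)
      (fun i => f i / f i0) (fun j => g j / g j0) (fun i _ => by positivity)
      (fun i hi => ⟨div_nonneg (le_max_right _ _) hF.le, (div_le_one hF).2 (hmaxf i hi)⟩)
      (fun i hi => ⟨div_nonneg (Nat.cast_nonneg _) hG.le, (div_le_one hG).2 (hmaxg i hi)⟩)
      ⟨i0, hi0, div_self hF.ne'⟩ ⟨j0, hj0, div_self hG.ne'⟩ (by
        intro t ht ht1 i hi j hj h1 h2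
        rw [le_div_iff₀ hF] at h1
        rw [le_div_iff₀ hG] at h2
        have p1 : 0 < t * f i0 := by positivity
        have p2 : 0 < t * g j0 := by positivity
        have q1 : t * f i0 ≤ ((bmSlice Y i).card : ℝ) - c := by
          rcases le_max_iff.1 h1 with h | h
          · exact h
          · linarith
        have r1 : (bmSlice Y i).Nonempty := by
          rw [← Finset.card_pos]
          have : (0:ℝ) < (bmSlice Y i).card := by linarith
          exact_mod_cast this
        have r2 : (bmSlice Z j).Nonempty := by
          rw [← Finset.card_pos]
          have : (0:ℝ) < (bmSlice Z j).card := by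
            simp only [hg] at h2 p2; linarith
          exact_mod_cast this
        have hsub := bmSlice_add Y Z i j
        have hle : ((bmSlice Y i + bmSlice Z j).card : ℝ) ≤ (bmSlice (Y+Z) (i+j)).card := by
          exact_mod_cast Finset.card_le_card hsub
        refine ⟨?_, ?_⟩
        · obtain ⟨w, hw⟩ := (r1.add r2)
          have := hCS _ ((mem_bmSlice _ _ _).1 (hsub hw))
          simpa using this
        · rw [le_div_iff₀ hK0]
          refine le_trans ?_ hle
          rcases Nat.eq_zero_or_pos m with hm | hm
          · have : K = 1 := by rw [hK, hm]; simp
            rw [this]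
            have := (r1.add r2).card_pos
            have : (1:ℝ) ≤ (bmSlice Y i + bmSlice Z j).card := by exact_mod_cast this
            linarith
          · obtain ⟨τ, hτ, hτt⟩ := bm_root m t ht (by omega)
            have := ih (fun k => ns k.succ) (fun k => hns _) _ _ (hYs i) r1 r2 (τ * α) (τ * β)
              (by positivity) (by positivity) (by rw [mul_pow, hτt, hαF]; exact q1)
              (by rw [mul_pow, hτt, hβG]; exact h2)
            rwa [← mul_add, mul_pow, hτt] at this)
    rw [← Finset.sum_div, ← Finset.sum_div, ← Finset.sum_div, ← sC, ← sZ] at main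
    refine (bm_holder m a b α β ha hb hα hβ).trans ?_
    rw [← hK, hαF, hβG, mul_comm, ← le_div_iff₀ hK0]
    have t1 : a ^ (m+1) / f i0 ≤ (∑ i ∈ I, f i) / f i0 - 1 := by
      rw [← div_self hF.ne', ← sub_div]
      gcongr
    have t2 : b ^ (m+1) / g j0 ≤ Z.card / g j0 := by gcongr
    linarith

theorem bm_in_boxes (d n : ℕ) (hd : 0 < d) (hn : 0 < n)
    (ns : Fin d → ℕ) (hns : ∀ i, n ≤ ns i)
    (P : Finset (Fin d → ℤ)) (hP : P = Fintype.piFinset (fun i => Finset.Icc 0 (ns i : ℤ)))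
    (Y Z : Finset (Fin d → ℤ)) (hYP : Y ⊆ P) (hY : Y.Nonempty) (hZ : Z.Nonempty) :
    ((Y + Z).card : ℝ) ^ ((1 : ℝ) / d) ≥
      (max ((Y.card : ℝ) - d * (n : ℝ)⁻¹ * P.card) 0) ^ ((1 : ℝ) / d)
        + (Z.card : ℝ) ^ ((1 : ℝ) / d) := by
  have hPc : (P.card : ℝ) = ∏ i, ((ns i : ℝ) + 1) := by
    rw [hP, Fintype.card_piFinset]
    push_cast
    refine Finset.prod_congr rfl fun k _ => ?_
    rw [Int.card_Icc]
    have : ((ns k : ℤ) + 1 - 0).toNat = ns k + 1 := by omega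
    rw [this]; push_cast; rfl
  rw [one_div, ge_iff_le]
  rcases le_or_gt ((Y.card : ℝ) - d * (n : ℝ)⁻¹ * P.card) 0 with h | h
  · rw [max_eq_right h, Real.zero_rpow (by positivity), zero_add]
    have : (Z.card : ℝ) ≤ (Y + Z).card := by exact_mod_cast Finset.card_le_card_add_left hY
    gcongr
  · rw [max_eq_left h.le]
    rw [Real.le_rpow_inv_iff_of_pos (by positivity) (by positivity) (by exact_mod_cast hd),
      Real.rpow_natCast]
    apply bm_ind n hn d ns hns Y Z (hP ▸ hYP) hY hZ _ _ (by positivity) (by positivity)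
    · rw [Real.rpow_inv_natCast_pow h.le hd.ne', hPc]
    · rw [Real.rpow_inv_natCast_pow (by positivity) hd.ne']
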